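/- Let a, b, c be complex numbers such that (a+b+3)/2 is not a nonpositive integer, 2c+1 is not a nonpositive integer, and Re(2c − a − b) > −4. Then ₃F₂(a, b, c; (a+b+3)/2, 2c+2; 1) = ₃F₂(a, b, c; (a+b+3)/2, 2c+1; 1) − (2abc/((2c+1)(2c+2)(a+b+3))) · ₃F₂(a+1, b+1, c+1; (a+b+5)/2, 2c+3; 1). -/

import Mathlib

open scoped Nat

/-- The generalized hypergeometric series `₃F₂(a, b, c; d, e; 1)`, defined as
`∑ₙ (a)ₙ(b)ₙ(c)ₙ / ((d)ₙ(e)ₙ n!)` where `(α)ₙ` is the Pochhammer symbol. -/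
noncomputable def hyp3F2 (a b c d e : ℂ) : ℂ :=
  ∑' n : ℕ,
    ((ascPochhammer ℂ n).eval a * (ascPochhammer ℂ n).eval b * (ascPochhammer ℂ n).eval c) /
      ((ascPochhammer ℂ n).eval d * (ascPochhammer ℂ n).eval e * (n ! : ℂ))

/-!
The relation only concerns the last lower parameter, and holds with arbitrary `d` and `e` in place
of `(a + b + 3) / 2` and `2c + 1`. Since `1 / (e)ₙ₊₁ - 1 / (e + 1)ₙ₊₁ = (n + 1) / (e)ₙ₊₂`, the terms
of index `n + 1` of the series at `e` and `e + 1` differ by a constant multiple of the term of index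
`n` of the shifted series. Convergence comes from Euler's limit `nˢ n! / (s)ₙ₊₁ → Γ(s)` and its
inverse, which give the term of index `n + 1` the order `n ^ (a + b + c - d - e - 1)`.
-/

open Filter Topology Asymptotics

theorem ascPochhammer_eval_eq_prod_range {R : Type*} [CommSemiring R] (s : R) (n : ℕ) :
    (ascPochhammer R n).eval s = ∏ j ∈ Finset.range n, (s + j) := by
  induction n with
  | zero => simp
  | succ n ih => rw [ascPochhammer_succ_eval, ih, Finset.prod_range_succ]

theorem ascPochhammer_succ_eval_left {R : Type*} [CommSemiring R] (s : R) (n : ℕ) :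
    (ascPochhammer R (n + 1)).eval s = s * (ascPochhammer R n).eval (s + 1) := by
  simp [ascPochhammer_succ_left, Polynomial.eval_comp]

theorem ascPochhammer_eval_ne_zero {R : Type*} [Ring R] [IsDomain R] {s : R}
    (hs : ∀ m : ℕ, s ≠ -(m : R)) (n : ℕ) : (ascPochhammer R n).eval s ≠ 0 := by
  rw [Ne, ascPochhammer_eval_eq_zero_iff]
  rintro ⟨m, -, hm⟩
  exact hs m (by rw [hm, neg_neg])

theorem inv_ascPochhammer_succ_eval_sub_inv {K : Type*} [Field K] {s : K} {n : ℕ}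
    (hs : (ascPochhammer K (n + 2)).eval s ≠ 0) :
    ((ascPochhammer K (n + 1)).eval s)⁻¹ - ((ascPochhammer K (n + 1)).eval (s + 1))⁻¹ =
      (n + 1) / (ascPochhammer K (n + 2)).eval s := by
  have last : (ascPochhammer K (n + 2)).eval s =
      (ascPochhammer K (n + 1)).eval s * (s + (n + 1)) := by
    rw [ascPochhammer_succ_eval, Nat.cast_succ]
  have first : (ascPochhammer K (n + 2)).eval s =
      s * (ascPochhammer K (n + 1)).eval (s + 1) := ascPochhammer_succ_eval_left s (n + 1)
  have hs₀ := left_ne_zero_of_mul (last ▸ hs)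
  have hs₁ := right_ne_zero_of_mul (first ▸ hs)
  rw [inv_sub_inv hs₀ hs₁, div_eq_div_iff (mul_ne_zero hs₀ hs₁) hs]
  linear_combination (ascPochhammer K (n + 1)).eval (s + 1) * last -
    (ascPochhammer K (n + 1)).eval s * first

theorem GammaSeq_eq_div_ascPochhammer (s : ℂ) (n : ℕ) :
    Complex.GammaSeq s n = (n : ℂ) ^ s * n ! / (ascPochhammer ℂ (n + 1)).eval s := by
  rw [Complex.GammaSeq, ascPochhammer_eval_eq_prod_range]

theorem tendsto_inv_GammaSeq (s : ℂ) :
    Tendsto (fun n ↦ (Complex.GammaSeq s n)⁻¹) atTop (𝓝 (Complex.Gamma s)⁻¹) := by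
  by_cases hs : Complex.Gamma s = 0
  · obtain ⟨m, rfl⟩ := (Complex.Gamma_eq_zero_iff s).mp hs
    -- At a pole `-m`, Mathlib sets `Gamma` to `0`, and `GammaSeq` is `x / 0 = 0` for `n ≥ m`.
    rw [hs, inv_zero]
    refine tendsto_const_nhds.congr' ?_
    filter_upwards [eventually_ge_atTop m] with n hn
    rw [GammaSeq_eq_div_ascPochhammer,
      ascPochhammer_eval_neg_coe_nat_of_lt (Nat.lt_succ_of_le hn), div_zero, inv_zero]
  · exact (Complex.GammaSeq_tendsto_Gamma s).inv₀ hs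

theorem natCast_cpow_mul_factorial_ne_zero (s : ℂ) {n : ℕ} (hn : n ≠ 0) :
    (n : ℂ) ^ s * n ! ≠ 0 :=
  mul_ne_zero (by simp [Complex.cpow_eq_zero_iff, hn]) (Nat.cast_ne_zero.mpr n.factorial_ne_zero)

theorem isBigO_ascPochhammer_succ_eval (s : ℂ) :
    (fun n : ℕ ↦ (ascPochhammer ℂ (n + 1)).eval s) =O[atTop] fun n ↦ (n : ℂ) ^ s * n ! := by
  have hO := (isBigO_refl (fun n : ℕ ↦ (n : ℂ) ^ s * n !) atTop).mul
    ((tendsto_inv_GammaSeq s).isBigO_one ℂ)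
  refine hO.congr' ?_ (.of_eq (funext fun _ ↦ mul_one _))
  filter_upwards [eventually_ne_atTop 0] with n hn
  rw [GammaSeq_eq_div_ascPochhammer, inv_div,
    mul_div_cancel₀ _ (natCast_cpow_mul_factorial_ne_zero s hn)]

theorem isBigO_inv_ascPochhammer_succ_eval (s : ℂ) :
    (fun n : ℕ ↦ ((ascPochhammer ℂ (n + 1)).eval s)⁻¹) =O[atTop]
      fun n ↦ ((n : ℂ) ^ s * n !)⁻¹ := by
  have hO := (isBigO_refl (fun n : ℕ ↦ ((n : ℂ) ^ s * n !)⁻¹) atTop).mul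
    ((Complex.GammaSeq_tendsto_Gamma s).isBigO_one ℂ)
  refine hO.congr' ?_ (.of_eq (funext fun _ ↦ mul_one _))
  filter_upwards [eventually_ne_atTop 0] with n hn
  rw [GammaSeq_eq_div_ascPochhammer, div_eq_mul_inv,
    inv_mul_cancel_left₀ (natCast_cpow_mul_factorial_ne_zero s hn)]

/-- The term of index `n` of the series `hyp3F2 a b c d e`. -/
noncomputable def hyp3F2Term (a b c d e : ℂ) (n : ℕ) : ℂ :=
  ((ascPochhammer ℂ n).eval a * (ascPochhammer ℂ n).eval b * (ascPochhammer ℂ n).eval c) /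
    ((ascPochhammer ℂ n).eval d * (ascPochhammer ℂ n).eval e * (n ! : ℂ))

theorem hyp3F2_eq_tsum (a b c d e : ℂ) : hyp3F2 a b c d e = ∑' n, hyp3F2Term a b c d e n := rfl

theorem hyp3F2Term_zero (a b c d e : ℂ) : hyp3F2Term a b c d e 0 = 1 := by
  simp [hyp3F2Term]

theorem isBigO_hyp3F2Term_succ (a b c d e : ℂ) :
    (fun n ↦ hyp3F2Term a b c d e (n + 1)) =O[atTop]
      fun n : ℕ ↦ (n : ℂ) ^ (a + b + c - d - e - 1) := by
  have hO :=
    (((isBigO_ascPochhammer_succ_eval a).mul (isBigO_ascPochhammer_succ_eval b)).mul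
      (isBigO_ascPochhammer_succ_eval c)).mul
    (((isBigO_inv_ascPochhammer_succ_eval d).mul (isBigO_inv_ascPochhammer_succ_eval e)).mul
      (isBigO_inv_ascPochhammer_succ_eval 1))
  refine hO.congr' (.of_eq (funext fun n ↦ ?_)) ?_
  · rw [ascPochhammer_eval_one, hyp3F2Term, div_eq_mul_inv, mul_inv, mul_inv]
  · filter_upwards [eventually_ne_atTop 0] with n hn
    have hn' : (n : ℂ) ≠ 0 := Nat.cast_ne_zero.mpr hn
    have hfact : (n ! : ℂ) ≠ 0 := Nat.cast_ne_zero.mpr n.factorial_ne_zero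
    simp only [Complex.cpow_sub _ _ hn', Complex.cpow_add _ _ hn']
    field_simp

theorem summable_hyp3F2Term {a b c d e : ℂ} (h : 0 < (d + e - a - b - c).re) :
    Summable (hyp3F2Term a b c d e) := by
  have hpow : Summable fun n : ℕ ↦ (n : ℂ) ^ (a + b + c - d - e - 1) := by
    have hre : 1 < (-(a + b + c - d - e - 1)).re := by
      simp only [Complex.add_re, Complex.sub_re, Complex.neg_re, Complex.one_re] at h ⊢
      linarith
    simpa only [one_div, ← Complex.cpow_neg, neg_neg] using
      Complex.summable_one_div_nat_cpow.mpr hre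
  exact (summable_nat_add_iff 1).mp <|
    summable_of_isBigO_nat' hpow (isBigO_hyp3F2Term_succ a b c d e)

theorem mul_hyp3F2Term_succ_sub {a b c d e : ℂ} {n : ℕ} (hd : d ≠ 0)
    (he : (ascPochhammer ℂ (n + 2)).eval e ≠ 0) :
    d * e * (e + 1) * (hyp3F2Term a b c d e (n + 1) - hyp3F2Term a b c d (e + 1) (n + 1)) =
      a * b * c * hyp3F2Term (a + 1) (b + 1) (c + 1) (d + 1) (e + 2) n := by
  have factor : (ascPochhammer ℂ (n + 2)).eval e =
      e * ((e + 1) * (ascPochhammer ℂ n).eval (e + 2)) := by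
    rw [ascPochhammer_succ_eval_left, ascPochhammer_succ_eval_left, add_assoc, one_add_one_eq_two]
  obtain ⟨he₀, he₁, -⟩ : e ≠ 0 ∧ e + 1 ≠ 0 ∧ (ascPochhammer ℂ n).eval (e + 2) ≠ 0 := by
    simpa only [factor, mul_ne_zero_iff] using he
  have hn : (n + 1 : ℂ) ≠ 0 := n.cast_add_one_ne_zero
  calc
    _ = d * e * (e + 1) * ((ascPochhammer ℂ (n + 1)).eval a * (ascPochhammer ℂ (n + 1)).eval b *
          (ascPochhammer ℂ (n + 1)).eval c / ((ascPochhammer ℂ (n + 1)).eval d * (n + 1)!)) *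
          (((ascPochhammer ℂ (n + 1)).eval e)⁻¹ -
            ((ascPochhammer ℂ (n + 1)).eval (e + 1))⁻¹) := by
      simp only [hyp3F2Term, div_eq_mul_inv, mul_inv]
      ring
    _ = a * b * c * hyp3F2Term (a + 1) (b + 1) (c + 1) (d + 1) (e + 2) n *
          (d / d * (e / e) * ((e + 1) / (e + 1)) * ((n + 1 : ℂ) / (n + 1))) := by
      rw [inv_ascPochhammer_succ_eval_sub_inv he, factor, hyp3F2Term, Nat.factorial_succ,
        Nat.cast_mul, Nat.cast_succ]
      simp only [ascPochhammer_succ_eval_left _ n, div_eq_mul_inv, mul_inv]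
      ring
    _ = _ := by
      simp only [div_self hd, div_self he₀, div_self he₁, div_self hn, mul_one]

theorem watson_contiguous_14_general {a b c d e : ℂ} (hd : ∀ m : ℕ, d ≠ -(m : ℂ))
    (he : ∀ m : ℕ, e ≠ -(m : ℂ)) (hre : 0 < (d + e - a - b - c).re) :
    hyp3F2 a b c d (e + 1) = hyp3F2 a b c d e -
      a * b * c / (d * e * (e + 1)) * hyp3F2 (a + 1) (b + 1) (c + 1) (d + 1) (e + 2) := by
  have hd₀ : d ≠ 0 := by simpa using hd 0
  have he₀ : e ≠ 0 := by simpa using he 0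
  have he₁ : e + 1 ≠ 0 := fun h ↦ he 1 (by simpa using eq_neg_of_add_eq_zero_left h)
  have hsum := summable_hyp3F2Term hre
  have hsum' : Summable (hyp3F2Term a b c d (e + 1)) := summable_hyp3F2Term <| by
    simp only [Complex.add_re, Complex.sub_re, Complex.one_re] at hre ⊢
    linarith
  have hdiff : d * e * (e + 1) * (hyp3F2 a b c d e - hyp3F2 a b c d (e + 1)) =
      a * b * c * hyp3F2 (a + 1) (b + 1) (c + 1) (d + 1) (e + 2) := by
    simp only [hyp3F2_eq_tsum]
    rw [← hsum.tsum_sub hsum', (hsum.sub hsum').tsum_eq_zero_add, hyp3F2Term_zero,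
      hyp3F2Term_zero, sub_self, zero_add, ← tsum_mul_left, ← tsum_mul_left]
    exact tsum_congr fun n ↦ mul_hyp3F2Term_succ_sub hd₀ (ascPochhammer_eval_ne_zero he _)
  rw [div_mul_eq_mul_div, ← hdiff, mul_div_cancel_left₀ _ (mul_ne_zero (mul_ne_zero hd₀ he₀) he₁),
    sub_sub_cancel]

theorem watson_contiguous_14 (a b c : ℂ)
    (hd : ∀ m : ℕ, (a + b + 3) / 2 ≠ -(m : ℂ))
    (he : ∀ m : ℕ, 2 * c + 1 ≠ -(m : ℂ))
    (hre : (2 * c - a - b).re > -4) :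
    hyp3F2 a b c ((a + b + 3) / 2) (2 * c + 2) =
      hyp3F2 a b c ((a + b + 3) / 2) (2 * c + 1) -
        2 * a * b * c / ((2 * c + 1) * (2 * c + 2) * (a + b + 3)) *
          hyp3F2 (a + 1) (b + 1) (c + 1) ((a + b + 5) / 2) (2 * c + 3) := by
  have hre' : 0 < ((a + b + 3) / 2 + (2 * c + 1) - a - b - c).re := by
    simp only [Complex.add_re, Complex.sub_re, Complex.mul_re, Complex.div_ofNat_re,
      Complex.re_ofNat, Complex.im_ofNat, Complex.one_re] at hre ⊢
    linarith
  have hcoeff : 2 * a * b * c / ((2 * c + 1) * (2 * c + 2) * (a + b + 3)) =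
      a * b * c / ((a + b + 3) / 2 * (2 * c + 1) * (2 * c + 1 + 1)) := by
    rw [← mul_div_mul_left (a * b * c) _ two_ne_zero]
    congr 1 <;> ring
  rw [hcoeff, show 2 * c + 2 = 2 * c + 1 + 1 by ring, show 2 * c + 3 = 2 * c + 1 + 2 by ring,
    show (a + b + 5) / 2 = (a + b + 3) / 2 + 1 by ring]
  exact watson_contiguous_14_general hd he hre'
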